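/- Let M be an n×n real symmetric positive definite matrix, let α ≥ 0, and let Z be an n×n real symmetric positive definite matrix with Z ≈_α M⁻¹. For b ∈ ℝⁿ let x⋆ = M⁻¹b, and define the preconditioned Richardson iteration y₀ = 0 and y_t = y_{t−1} − Z·M·y_{t−1} + Z·b for t ≥ 1. Then for every q ≥ 0, ‖x⋆ − y_q‖_M ≤ (e^α − 1)^q · ‖x⋆‖_M. -/

import Mathlib

/-!
The error `x⋆ - y t` satisfies `x⋆ - y (t + 1) = (1 - Z M) (x⋆ - y t)`, so it suffices that
`1 - Z M` contracts the `M`-norm by the factor `k = e ^ α - 1`. This operator is self-adjoint for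
the `M`-inner product, with form `B = M - M Z M`. Evaluating the hypothesis on vectors `M x` gives
`e ^ (-α) M ⪯ M Z M ⪯ e ^ α M`, hence `-k M ⪯ B ⪯ k M`, because `1 - e ^ (-α) ≤ e ^ α - 1`.
Finally, a symmetric form bounded by `k` times a quadratic form represents an operator of norm at
most `k` (`form_contraction`), which follows from polarization and needs no square root of `M`.
-/

open Matrix

/-- Loewner order: `P ⪯ Q` iff `Q - P` is positive semidefinite. -/
def LoewnerLE {n : ℕ} (P Q : Matrix (Fin n) (Fin n) ℝ) : Prop :=
  (Q - P).PosSemidef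

/-- `X ≈_α Y` iff `e^(−α)·X ⪯ Y ⪯ e^(α)·X` in the Loewner order. -/
def ApproxA {n : ℕ} (α : ℝ) (X Y : Matrix (Fin n) (Fin n) ℝ) : Prop :=
  LoewnerLE (Real.exp (-α) • X) Y ∧ LoewnerLE Y (Real.exp α • X)

/-- The `M`-norm of a vector `u`: `‖u‖_M = √(uᵀ M u)`. -/
noncomputable def Mnorm {n : ℕ} (M : Matrix (Fin n) (Fin n) ℝ) (u : Fin n → ℝ) : ℝ :=
  Real.sqrt (u ⬝ᵥ M *ᵥ u)

/-- If a symmetric form `B` satisfies `|B x x| ≤ k * Q x x` and `B e w = Q w w`, then the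
squared `Q`-norm of `w` is at most `k ^ 2` times that of `e`. If `B` is the form of an operator `T`
that is self-adjoint for `Q`, then `w = T e` satisfies the condition, and this bounds `T`. -/
lemma form_contraction {V : Type*} [AddCommGroup V] [Module ℝ V] (B Q : V →ₗ[ℝ] V →ₗ[ℝ] ℝ)
    (k : ℝ) (hk : 0 ≤ k) (hB : ∀ x y, B x y = B y x)
    (hup : ∀ x, B x x ≤ k * Q x x) (hlo : ∀ x, -(k * Q x x) ≤ B x x)
    (e w : V) (h : B e w = Q w w) : Q w w ≤ k ^ 2 * Q e e := by
  -- The scaling of `e` by `k` balances the two terms of the polarized bound.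
  have h1 := hup (k • e + w)
  have h2 := hlo (k • e - w)
  have h3 := hB w e
  simp only [map_add, map_sub, map_smul, LinearMap.add_apply, LinearMap.sub_apply,
    LinearMap.smul_apply, smul_eq_mul, h3, h] at h1 h2
  rcases hk.eq_or_lt with rfl | hk
  · have h1 := hup (e + w)
    have h2 := hlo (e - w)
    simp only [map_add, map_sub, LinearMap.add_apply, LinearMap.sub_apply, h3, h] at h1 h2
    linarith
  · have : k * (Q w w) ≤ k * (k ^ 2 * Q e e) := by nlinarith
    exact le_of_mul_le_mul_left this hk

/-- One Richardson step contracts the squared `M`-norm of the error. -/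
lemma step_contraction {n : ℕ} (M Z : Matrix (Fin n) (Fin n) ℝ) (hM : M.PosDef) (hZ : Z.PosDef)
    (α : ℝ) (hα : 0 ≤ α) (hZM : ApproxA α Z M⁻¹) (e : Fin n → ℝ) :
    (e - Z *ᵥ (M *ᵥ e)) ⬝ᵥ M *ᵥ (e - Z *ᵥ (M *ᵥ e)) ≤
      (Real.exp α - 1) ^ 2 * (e ⬝ᵥ M *ᵥ e) := by
  have hMt : Mᵀ = M := by simpa using hM.isHermitian.eq
  have hZt : Zᵀ = Z := by simpa using hZ.isHermitian.eq
  have hinv : M⁻¹ * M = 1 := Matrix.nonsing_inv_mul M ((Matrix.isUnit_iff_isUnit_det M).1 hM.isUnit)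
  have hMs : ∀ x y : Fin n → ℝ, x ⬝ᵥ M *ᵥ y = (M *ᵥ x) ⬝ᵥ y := fun x y => by
    rw [Matrix.dotProduct_mulVec, ← Matrix.mulVec_transpose, hMt]
  have hZs : ∀ x y : Fin n → ℝ, x ⬝ᵥ Z *ᵥ y = (Z *ᵥ x) ⬝ᵥ y := fun x y => by
    rw [Matrix.dotProduct_mulVec, ← Matrix.mulVec_transpose, hZt]
  have hQ : ∀ x : Fin n → ℝ, 0 ≤ x ⬝ᵥ M *ᵥ x := fun x => by
    simpa using hM.posSemidef.dotProduct_mulVec_nonneg x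
  have hvals : ∀ x : Fin n → ℝ, (M *ᵥ x) ⬝ᵥ M⁻¹ *ᵥ (M *ᵥ x) = x ⬝ᵥ M *ᵥ x := fun x => by
    rw [Matrix.mulVec_mulVec, hinv, Matrix.one_mulVec, hMs]
  have hlow : ∀ x : Fin n → ℝ,
      Real.exp (-α) * ((M *ᵥ x) ⬝ᵥ Z *ᵥ (M *ᵥ x)) ≤ x ⬝ᵥ M *ᵥ x := fun x => by
    have := hZM.1.dotProduct_mulVec_nonneg (M *ᵥ x)
    simp only [star_trivial, Matrix.sub_mulVec, dotProduct_sub, Matrix.smul_mulVec,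
      dotProduct_smul, smul_eq_mul, hvals] at this
    linarith
  have hhigh : ∀ x : Fin n → ℝ,
      x ⬝ᵥ M *ᵥ x ≤ Real.exp α * ((M *ᵥ x) ⬝ᵥ Z *ᵥ (M *ᵥ x)) := fun x => by
    have := hZM.2.dotProduct_mulVec_nonneg (M *ᵥ x)
    simp only [star_trivial, Matrix.sub_mulVec, dotProduct_sub, Matrix.smul_mulVec,
      dotProduct_smul, smul_eq_mul, hvals] at this
    linarith
  have ha : 1 ≤ Real.exp α := Real.one_le_exp hα
  have hmul : Real.exp α * Real.exp (-α) = 1 := by rw [← Real.exp_add]; simp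
  have hmid : 1 - Real.exp (-α) ≤ Real.exp α - 1 := by
    linarith [Real.add_one_le_exp α, Real.add_one_le_exp (-α)]
  have hB : ∀ x y : Fin n → ℝ, Matrix.toLinearMap₂' ℝ (M - M * Z * M) x y =
      x ⬝ᵥ M *ᵥ y - (M *ᵥ x) ⬝ᵥ Z *ᵥ (M *ᵥ y) := fun x y => by
    rw [Matrix.toLinearMap₂'_apply', Matrix.sub_mulVec, dotProduct_sub, ← Matrix.mulVec_mulVec,
      ← Matrix.mulVec_mulVec, hMs x (Z *ᵥ _)]
  have key := form_contraction (Matrix.toLinearMap₂' ℝ (M - M * Z * M))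
    (Matrix.toLinearMap₂' ℝ M) (Real.exp α - 1) (by linarith) ?_ ?_ ?_ e (e - Z *ᵥ (M *ᵥ e)) ?_
  · simpa only [Matrix.toLinearMap₂'_apply'] using key
  · intro x y
    rw [hB, hB, hMs, hZs, dotProduct_comm, dotProduct_comm (Z *ᵥ _)]
  · intro x
    rw [hB, Matrix.toLinearMap₂'_apply']
    have h1 : Real.exp (-α) * (x ⬝ᵥ M *ᵥ x) ≤ (M *ᵥ x) ⬝ᵥ Z *ᵥ (M *ᵥ x) := by
      have := mul_le_mul_of_nonneg_left (hhigh x) (Real.exp_pos (-α)).le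
      rwa [← mul_assoc, mul_comm (Real.exp (-α)) (Real.exp α), hmul, one_mul] at this
    nlinarith [mul_le_mul_of_nonneg_right hmid (hQ x)]
  · intro x
    rw [hB, Matrix.toLinearMap₂'_apply']
    have h1 : (M *ᵥ x) ⬝ᵥ Z *ᵥ (M *ᵥ x) ≤ Real.exp α * (x ⬝ᵥ M *ᵥ x) := by
      have := mul_le_mul_of_nonneg_left (hlow x) (Real.exp_pos α).le
      rwa [← mul_assoc, hmul, one_mul] at this
    linarith
  · rw [hB, Matrix.toLinearMap₂'_apply', hZs]
    exact (sub_dotProduct _ _ _).symm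

theorem stmt_10 {n : ℕ} (M Z : Matrix (Fin n) (Fin n) ℝ)
    (hM : M.PosDef) (hZ : Z.PosDef)
    (α : ℝ) (hα : 0 ≤ α) (hZM : ApproxA α Z M⁻¹)
    (b : Fin n → ℝ) (xstar : Fin n → ℝ) (hxstar : xstar = M⁻¹ *ᵥ b)
    (y : ℕ → Fin n → ℝ) (hy0 : y 0 = 0)
    (hy : ∀ t : ℕ, y (t + 1) = y t - Z *ᵥ (M *ᵥ y t) + Z *ᵥ b) :
    ∀ q : ℕ, Mnorm M (xstar - y q) ≤ (Real.exp α - 1) ^ q * Mnorm M xstar := by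
  have hk : 0 ≤ Real.exp α - 1 := by linarith [Real.one_le_exp hα]
  have hb : M *ᵥ xstar = b := by
    rw [hxstar, Matrix.mulVec_mulVec,
      Matrix.mul_nonsing_inv M ((Matrix.isUnit_iff_isUnit_det M).1 hM.isUnit), Matrix.one_mulVec]
  intro q
  induction q with
  | zero => simp [hy0]
  | succ t ih =>
    have herr : xstar - y (t + 1) = (xstar - y t) - Z *ᵥ (M *ᵥ (xstar - y t)) := by
      rw [hy, Matrix.mulVec_sub, Matrix.mulVec_sub, hb]
      abel
    have hstep : Mnorm M (xstar - y (t + 1)) ≤ (Real.exp α - 1) * Mnorm M (xstar - y t) := by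
      rw [herr]
      unfold Mnorm
      refine (Real.sqrt_le_sqrt (step_contraction M Z hM hZ α hα hZM _)).trans_eq ?_
      rw [Real.sqrt_mul (sq_nonneg _), Real.sqrt_sq hk]
    calc _ ≤ _ := hstep
      _ ≤ (Real.exp α - 1) * ((Real.exp α - 1) ^ t * Mnorm M xstar) :=
        mul_le_mul_of_nonneg_left ih hk
      _ = _ := by ring
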